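/- arXiv:math/0504481 — 2 statements merged into one kernel-verified Lean document; each statement's English description precedes it below -/
import Mathlib

section
/- For all n ≥ 1, T > 0, C₁, C₂, M, Λ > 0 there exists C > 0 with the following property. Let g = (g^{αβ}) be a C¹ field of symmetric n×n matrices on an open neighborhood of [−T,T] × ℝⁿ with C₁·Id ≤ g ≤ C₂·Id and all first-order partial derivatives of the g^{αβ} bounded by M; let b⁰,…,bⁿ, c be measurable and bounded by M; let f be continuous with τ ↦ ‖f(τ,·)‖_{L²} integrable on [−T,T]; let φ : ℝⁿ → ℝ be Lipschitz with constant at most Λ, with −T < φ(x) < T for all x, and weakly spacelike: Σ g^{αβ}(φ(x),x) ∂_αφ(x) ∂_βφ(x) ≤ 1 for almost every x; let v be C² on a neighborhood of [−T,T] × ℝⁿ, vanishing for |x| ≥ R for some R, and satisfying ∂_t²v − Σ g^{αβ}∂_α∂_β v + b⁰∂_t v + Σ b^α∂_α v + c v = f. Then, with w(x) := v(φ(x),x) (a Lipschitz, compactly supported function) and ∇w its almost-everywhere gradient, for every s ∈ [−T,T]: ∫_{ℝⁿ} (w(x)² + |∇w(x)|²) dx ≤ C·(E(s,v) + (∫_{−T}^{T}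 ‖f(τ,·)‖_{L²(ℝⁿ)} dτ)²). -/
open MeasureTheory

/-- Time partial derivative `∂_t u` of a function on `ℝ × ℝⁿ`. -/
noncomputable def Dt {n : ℕ} (u : ℝ × (Fin n → ℝ) → ℝ) (p : ℝ × (Fin n → ℝ)) : ℝ :=
  fderiv ℝ u p (1, 0)

/-- Spatial partial derivative `∂_α u` of a function on `ℝ × ℝⁿ`. -/
noncomputable def Dx {n : ℕ} (α : Fin n) (u : ℝ × (Fin n → ℝ) → ℝ)
    (p : ℝ × (Fin n → ℝ)) : ℝ :=
  fderiv ℝ u p (0, Pi.single α 1)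

/-- The energy at time `t` of `v` for the time-dependent metric `g`. -/
noncomputable def energy {n : ℕ} (g : Fin n → Fin n → ℝ × (Fin n → ℝ) → ℝ)
    (v : ℝ × (Fin n → ℝ) → ℝ) (t : ℝ) : ℝ :=
  ∫ x : Fin n → ℝ,
    ((Dt v (t, x)) ^ 2 + (∑ α, ∑ β, g α β (t, x) * Dx α v (t, x) * Dx β v (t, x))
      + (v (t, x)) ^ 2)

section Helpers


section Basics
variable {n : ℕ}

lemma cs_bound {H : ℝ × (Fin n → ℝ) → ℝ} (hH : HasCompactSupport H) :
    ∃ R : ℝ, ∀ t x, x ∉ Metric.closedBall (0 : Fin n → ℝ) R → H (t, x) = 0 := by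
  obtain ⟨R, hR⟩ := hH.isCompact.isBounded.subset_closedBall (0 : ℝ × (Fin n → ℝ))
  refine ⟨R, fun t x hx => ?_⟩
  by_contra h
  apply hx
  have := hR (subset_tsupport _ (Function.mem_support.2 h))
  rw [mem_closedBall_zero_iff] at this ⊢
  exact (le_trans (by rw [Prod.norm_def]; exact le_max_right _ _) this)

lemma slice_cs {H : ℝ × (Fin n → ℝ) → ℝ} (hH : HasCompactSupport H) (φ : (Fin n → ℝ) → ℝ) :
    HasCompactSupport (fun x => H (φ x, x)) := by
  obtain ⟨R, hR⟩ := cs_bound hH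
  exact HasCompactSupport.intro (isCompact_closedBall 0 R) (fun x hx => hR _ x hx)

lemma Dt_cont {H : ℝ × (Fin n → ℝ) → ℝ} (hH : ContDiff ℝ 1 H) : Continuous (Dt H) := by
  have := hH.continuous_fderiv (by simp)
  unfold Dt; fun_prop

lemma Dx_cont {H : ℝ × (Fin n → ℝ) → ℝ} (hH : ContDiff ℝ 1 H) (α : Fin n) :
    Continuous (Dx α H) := by
  have := hH.continuous_fderiv (by simp)
  unfold Dx; fun_prop

lemma Dt_cs {H : ℝ × (Fin n → ℝ) → ℝ} (hH : HasCompactSupport H) : HasCompactSupport (Dt H) :=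
  hH.fderiv_apply ℝ _

lemma Dx_cs {H : ℝ × (Fin n → ℝ) → ℝ} (hH : HasCompactSupport H) (α : Fin n) :
    HasCompactSupport (Dx α H) :=
  hH.fderiv_apply ℝ _

lemma chain {Q : ℝ × (Fin n → ℝ) → ℝ} {φ : (Fin n → ℝ) → ℝ} {x : Fin n → ℝ}
    (hQ : DifferentiableAt ℝ Q (φ x, x)) (hφ : DifferentiableAt ℝ φ x) (e : Fin n → ℝ) :
    fderiv ℝ (fun y => Q (φ y, y)) x e
      = Dt Q (φ x, x) * fderiv ℝ φ x e + fderiv ℝ Q (φ x, x) (0, e) := by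
  have h1 : HasFDerivAt (fun y => (φ y, y))
      ((fderiv ℝ φ x).prod (ContinuousLinearMap.id ℝ (Fin n → ℝ))) x :=
    hφ.hasFDerivAt.prodMk (hasFDerivAt_id x)
  have h2 : HasFDerivAt (fun y => Q (φ y, y)) _ x :=
    HasFDerivAt.comp (g := Q) x hQ.hasFDerivAt h1
  rw [h2.fderiv]
  simp only [ContinuousLinearMap.comp_apply, ContinuousLinearMap.prod_apply,
    ContinuousLinearMap.id_apply, Dt]
  have : ((fderiv ℝ φ x e, e) : ℝ × (Fin n → ℝ)) = (fderiv ℝ φ x e) • (1, 0) + (0, e) := by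
    simp
  rw [this, map_add, map_smul]
  simp [mul_comm]

lemma integral_fderiv_zero {K : NNReal} {w : (Fin n → ℝ) → ℝ} (hw : LipschitzWith K w)
    (hc : HasCompactSupport w) (e : Fin n → ℝ) : ∫ x, fderiv ℝ w x e = 0 := by
  have h := LipschitzWith.integral_lineDeriv_mul_eq (μ := volume)
    (LipschitzWith.const (1:ℝ) : LipschitzWith 0 (fun _ : Fin n → ℝ => (1:ℝ))) hw hc (-e)
  have h2 : ∫ x, fderiv ℝ w x e = ∫ x, lineDeriv ℝ w x (- -e) * 1 := by
    apply integral_congr_ae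
    filter_upwards [hw.ae_differentiableAt (μ := volume)] with x hx
    rw [hx.lineDeriv_eq_fderiv]; simp
  rw [h2, ← h]
  simp [lineDeriv]

lemma trace_zero {Q : ℝ × (Fin n → ℝ) → ℝ} (hQ : ContDiff ℝ 1 Q) (hc : HasCompactSupport Q)
    {K : NNReal} {φ : (Fin n → ℝ) → ℝ} (hφ : LipschitzWith K φ) (α : Fin n) :
    ∫ x, (Dt Q (φ x, x) * fderiv ℝ φ x (Pi.single α 1) + Dx α Q (φ x, x)) = 0 := by
  obtain ⟨C, hC⟩ := hQ.lipschitzWith_of_hasCompactSupport hc (by simp)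
  have hl : LipschitzWith (C * max K 1) (fun y => Q (φ y, y)) :=
    hC.comp (hφ.prodMk LipschitzWith.id)
  rw [← integral_fderiv_zero hl (slice_cs hc φ) (Pi.single α 1)]
  apply integral_congr_ae
  filter_upwards [hφ.ae_differentiableAt (μ := volume)] with x hx
  rw [chain (hQ.differentiable (by simp) _) hx]
  rfl

lemma integrable_of_bdd {Ω : Type*} [MeasurableSpace Ω] {μ : Measure Ω} {a : Ω → ℝ} {S : Set Ω}
    (hS : μ S ≠ ⊤) (ha : AEStronglyMeasurable a μ) {C : ℝ} (hb : ∀ x, |a x| ≤ C)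
    (h0 : ∀ x, x ∉ S → a x = 0) : Integrable a μ := by
  rw [← integrableOn_iff_integrable_of_support_subset (s := S)]
  · exact Measure.integrableOn_of_bounded hS ha (M := C) (Filter.Eventually.of_forall hb)
  · intro x hx
    by_contra h
    exact hx (h0 x h)

/-- The affine-in-time reparametrisation of a function. -/
noncomputable def Qth (F : ℝ × (Fin n → ℝ) → ℝ) (s θ : ℝ) : ℝ × (Fin n → ℝ) → ℝ :=
  fun p => (p.1 - s) * F (s + θ * (p.1 - s), p.2)

lemma Qth_smooth {F : ℝ × (Fin n → ℝ) → ℝ} (hF : ContDiff ℝ 1 F) (s θ : ℝ) :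
    ContDiff ℝ 1 (Qth F s θ) := by
  unfold Qth; fun_prop

lemma Qth_cs {F : ℝ × (Fin n → ℝ) → ℝ} (hF : HasCompactSupport F) (s : ℝ) {θ : ℝ} (hθ : 0 < θ) :
    HasCompactSupport (Qth F s θ) := by
  obtain ⟨R, hR⟩ := hF.isCompact.isBounded.subset_closedBall (0 : ℝ × (Fin n → ℝ))
  have hz : ∀ t x, F (t, x) ≠ 0 → |t| ≤ R ∧ ‖x‖ ≤ R := by
    intro t x h
    have := hR (subset_tsupport _ (Function.mem_support.2 h))
    rw [mem_closedBall_zero_iff, Prod.norm_def, max_le_iff] at this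
    exact this
  refine HasCompactSupport.intro
    (K := Metric.closedBall (0:ℝ) ((R + |s|) / θ + |s|) ×ˢ Metric.closedBall (0 : Fin n → ℝ) R)
    ((isCompact_closedBall _ _).prod (isCompact_closedBall _ _)) ?_
  rintro ⟨t, x⟩ hp
  by_contra h
  apply hp
  have h1 : F (s + θ * (t - s), x) ≠ 0 := fun h0 => h (by simp [Qth, h0])
  obtain ⟨h2, h3⟩ := hz _ _ h1
  simp only [Set.mem_prod, mem_closedBall_zero_iff, Real.norm_eq_abs]
  refine ⟨?_, h3⟩
  have h4 : |θ * (t - s)| ≤ R + |s| := by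
    calc |θ * (t - s)| = |(s + θ * (t-s)) - s| := by ring_nf
      _ ≤ |s + θ * (t-s)| + |s| := abs_sub _ _
      _ ≤ _ := by linarith
  rw [abs_mul, abs_of_pos hθ] at h4
  have h5 : |t - s| ≤ (R + |s|) / θ := by rw [le_div_iff₀ hθ]; linarith
  calc |t| = |(t - s) + s| := by ring_nf
    _ ≤ |t - s| + |s| := abs_add_le _ _
    _ ≤ _ := by linarith

lemma hasFDerivAt_Qth {F : ℝ × (Fin n → ℝ) → ℝ} (hF : ContDiff ℝ 1 F) (s θ : ℝ)
    (p : ℝ × (Fin n → ℝ)) (d : ℝ × (Fin n → ℝ)) :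
    fderiv ℝ (Qth F s θ) p d = d.1 * F (s + θ * (p.1 - s), p.2)
      + (p.1 - s) * fderiv ℝ F (s + θ * (p.1 - s), p.2) (θ * d.1, d.2) := by
  have h1 : HasFDerivAt (fun p : ℝ × (Fin n → ℝ) => (s + θ * (p.1 - s), p.2))
      ((θ • (ContinuousLinearMap.fst ℝ ℝ (Fin n → ℝ))).prod
        (ContinuousLinearMap.snd ℝ ℝ (Fin n → ℝ))) p := by
    refine HasFDerivAt.prodMk ?_ hasFDerivAt_snd
    exact ((hasFDerivAt_fst.sub_const s).const_mul θ).const_add s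
  have h2 : HasFDerivAt (fun p : ℝ × (Fin n → ℝ) => F (s + θ * (p.1 - s), p.2)) _ p :=
    HasFDerivAt.comp (g := F) p ((hF.differentiable (by simp) _).hasFDerivAt) h1
  have h3 : HasFDerivAt (Qth F s θ) _ p :=
    (((hasFDerivAt_fst (𝕜 := ℝ) (p := p)).sub_const s)).mul h2
  rw [h3.fderiv]
  simp
  ring

lemma Dt_Qth {F : ℝ × (Fin n → ℝ) → ℝ} (hF : ContDiff ℝ 1 F) (s θ t : ℝ) (x : Fin n → ℝ) :
    Dt (Qth F s θ) (t, x) = F (s + θ * (t - s), x)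
      + θ * ((t - s) * Dt F (s + θ * (t - s), x)) := by
  rw [Dt, hasFDerivAt_Qth hF]
  have : ((θ * 1, 0) : ℝ × (Fin n → ℝ)) = θ • (1, 0) := by simp
  simp only [this, map_smul, Dt, smul_eq_mul]; ring

lemma Dx_Qth {F : ℝ × (Fin n → ℝ) → ℝ} (hF : ContDiff ℝ 1 F) (s θ t : ℝ) (x : Fin n → ℝ)
    (α : Fin n) :
    Dx α (Qth F s θ) (t, x) = (t - s) * Dx α F (s + θ * (t - s), x) := by
  rw [Dx, hasFDerivAt_Qth hF]
  simp [Dx]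

lemma hasDerivAt_slice {F : ℝ × (Fin n → ℝ) → ℝ} (hF : ContDiff ℝ 1 F) (t : ℝ) (x : Fin n → ℝ) :
    HasDerivAt (fun τ => F (τ, x)) (Dt F (t, x)) t := by
  have h1 : HasDerivAt (fun τ : ℝ => (τ, x)) ((1:ℝ), (0 : Fin n → ℝ)) t :=
    (hasDerivAt_id t).prodMk (hasDerivAt_const t x)
  exact ((hF.differentiable (by simp) (t, x)).hasFDerivAt).comp_hasDerivAt t h1

lemma bdd_of_cs {H : ℝ × (Fin n → ℝ) → ℝ} (hH : Continuous H) (hc : HasCompactSupport H) :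
    ∃ C, 0 ≤ C ∧ ∀ p, |H p| ≤ C := by
  obtain ⟨C, hC⟩ := hc.exists_bound_of_continuous hH
  exact ⟨C, (norm_nonneg _).trans (hC 0), hC⟩

lemma abs_fderiv_le {K : NNReal} {φ : (Fin n → ℝ) → ℝ} (hφ : LipschitzWith K φ) (α : Fin n)
    (x : Fin n → ℝ) : |fderiv ℝ φ x (Pi.single α 1)| ≤ K := by
  have h1 := (fderiv ℝ φ x).le_opNorm (Pi.single α 1)
  have h2 := norm_fderiv_le_of_lipschitz ℝ (x₀ := x) hφ
  have h3 : ‖(Pi.single α 1 : Fin n → ℝ)‖ ≤ 1 := by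
    rw [Pi.norm_single]; simp
  rw [Real.norm_eq_abs] at h1
  calc _ ≤ _ := h1
    _ ≤ K * 1 := by gcongr
    _ = K := mul_one _

lemma flux {F : ℝ × (Fin n → ℝ) → ℝ} (hF : ContDiff ℝ 1 F) (hc : HasCompactSupport F)
    {K : NNReal} {φ : (Fin n → ℝ) → ℝ} (hφ : LipschitzWith K φ) (α : Fin n) (s T : ℝ)
    (hT : ∀ x, |φ x - s| ≤ T) :
    (∫ x, (F (φ x, x) * fderiv ℝ φ x (Pi.single α 1) + ∫ t in s..φ x, Dx α F (t, x))) = 0 := by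
  set a : ℝ → (Fin n → ℝ) → ℝ := fun θ x =>
    (F (s + θ * (φ x - s), x) + θ * ((φ x - s) * Dt F (s + θ * (φ x - s), x)))
      * fderiv ℝ φ x (Pi.single α 1) + (φ x - s) * Dx α F (s + θ * (φ x - s), x) with ha
  have hφc := hφ.continuous
  have hFc := hF.continuous
  have hFt := Dt_cont hF
  have hFx := Dx_cont hF α
  have hm : Measurable (fun x => fderiv ℝ φ x (Pi.single α 1)) :=
    measurable_fderiv_apply_const ℝ φ _
  have key : ∀ θ : ℝ, 0 < θ → ∫ x, a θ x = 0 := by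
    intro θ hθ
    rw [← trace_zero (Qth_smooth hF s θ) (Qth_cs hc s hθ) hφ α]
    apply integral_congr_ae
    refine Filter.Eventually.of_forall fun x => ?_
    simp only [ha, Dt_Qth hF, Dx_Qth hF]
  have hint : Integrable (Function.uncurry a)
      ((volume.restrict (Set.uIoc (0:ℝ) 1)).prod volume) := by
    obtain ⟨R, hR⟩ := cs_bound hc
    obtain ⟨R1, hR1⟩ := cs_bound (Dt_cs hc)
    obtain ⟨R2, hR2⟩ := cs_bound (Dx_cs hc α)
    obtain ⟨B, hB0, hB⟩ := bdd_of_cs hFc hc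
    obtain ⟨B1, hB10, hB1⟩ := bdd_of_cs hFt (Dt_cs hc)
    obtain ⟨B2, hB20, hB2⟩ := bdd_of_cs hFx (Dx_cs hc α)
    have hmeas : Measurable (Function.uncurry a) := by
      have h1 : Measurable (fun p : ℝ × (Fin n → ℝ) =>
        F (s + p.1 * (φ p.2 - s), p.2)
          + p.1 * ((φ p.2 - s) * Dt F (s + p.1 * (φ p.2 - s), p.2))) :=
        Continuous.measurable (by fun_prop)
      have h2 : Measurable (fun p : ℝ × (Fin n → ℝ) =>
        (φ p.2 - s) * Dx α F (s + p.1 * (φ p.2 - s), p.2)) :=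
        Continuous.measurable (by fun_prop)
      exact (h1.mul (hm.comp measurable_snd)).add h2
    have hvol : (volume.restrict (Set.uIoc (0:ℝ) 1)).prod (volume : Measure (Fin n → ℝ))
        = (volume.prod volume).restrict (Set.uIoc (0:ℝ) 1 ×ˢ Set.univ) := by
      rw [← Measure.prod_restrict, Measure.restrict_univ]
    rw [hvol]
    set S := Metric.closedBall (0 : Fin n → ℝ) (max R (max R1 R2))
    have hS : ∀ x, x ∉ S → ∀ θ, a θ x = 0 := by
      intro x hx θ
      have e1 : x ∉ Metric.closedBall (0 : Fin n → ℝ) R :=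
        fun h => hx (Metric.closedBall_subset_closedBall (le_max_left _ _) h)
      have e2 : x ∉ Metric.closedBall (0 : Fin n → ℝ) R1 :=
        fun h => hx (Metric.closedBall_subset_closedBall
          ((le_max_left _ _).trans (le_max_right _ _)) h)
      have e3 : x ∉ Metric.closedBall (0 : Fin n → ℝ) R2 :=
        fun h => hx (Metric.closedBall_subset_closedBall
          ((le_max_right _ _).trans (le_max_right _ _)) h)
      simp [ha, hR _ x e1, hR1 _ x e2, hR2 _ x e3]
    have hT0 : 0 ≤ T := (abs_nonneg _).trans (hT 0)
    have hbd : ∀ θ ∈ Set.uIoc (0:ℝ) 1, ∀ x, |a θ x| ≤ (B + 1 * (T * B1)) * K + T * B2 := by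
      intro θ hθ x
      rw [Set.uIoc_of_le zero_le_one] at hθ
      have hθ1 : |θ| ≤ 1 := by rw [abs_of_pos hθ.1]; exact hθ.2
      have := abs_fderiv_le hφ α x
      simp only [ha]
      refine (abs_add_le _ _).trans ?_
      rw [abs_mul, abs_mul (φ x - s)]
      gcongr
      · refine (abs_add_le _ _).trans ?_
        rw [abs_mul, abs_mul (φ x - s)]
        gcongr
        · exact hB _
        · exact hT x
        · exact hB1 _
      · exact hT x
      · exact hB2 _
    have : IntegrableOn (Function.uncurry a) (Set.uIoc (0:ℝ) 1 ×ˢ S) (volume.prod volume) := by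
      apply Measure.integrableOn_of_bounded (M := (B + 1 * (T * B1)) * K + T * B2)
      · rw [Measure.prod_prod]
        refine ENNReal.mul_ne_top (by simp) ?_
        exact (isCompact_closedBall _ _).measure_lt_top.ne
      · exact hmeas.aestronglyMeasurable
      · refine (ae_restrict_iff' (measurableSet_uIoc.prod
          Metric.isClosed_closedBall.measurableSet)).2 (Filter.Eventually.of_forall ?_)
        rintro ⟨θ, x⟩ ⟨hθ, -⟩
        exact hbd θ hθ x
    refine this.of_forall_sdiff_eq_zero (measurableSet_uIoc.prod MeasurableSet.univ) ?_
    rintro ⟨θ, x⟩ ⟨⟨h1, -⟩, h2⟩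
    exact hS x (fun h => h2 ⟨h1, h⟩) θ
  have hsw := intervalIntegral_integral_swap (a := 0) (b := 1) hint
  have h0 : ∫ θ in (0:ℝ)..1, ∫ x, a θ x = 0 := by
    rw [intervalIntegral.integral_of_le zero_le_one]
    rw [setIntegral_congr_fun measurableSet_Ioc (g := fun _ => (0:ℝ))]
    · simp
    · intro θ hθ; exact key θ hθ.1
  rw [h0] at hsw
  rw [hsw]
  apply integral_congr_ae
  refine Filter.Eventually.of_forall fun x => ?_
  simp only [ha]
  rw [intervalIntegral.integral_add
    (Continuous.intervalIntegrable (by fun_prop) _ _)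
    (Continuous.intervalIntegrable (by fun_prop) _ _),
    intervalIntegral.integral_mul_const, intervalIntegral.integral_const_mul,
    show (fun θ : ℝ => Dx α F (s + θ * (φ x - s), x))
      = fun θ => (fun t => Dx α F (t, x)) (s + (φ x - s) * θ) from by
        funext θ; simp only [mul_comm],
    intervalIntegral.mul_integral_comp_add_mul (f := fun t => Dx α F (t, x))]
  have hftc : ∫ θ in (0:ℝ)..1, (F (s + θ * (φ x - s), x)
      + θ * ((φ x - s) * Dt F (s + θ * (φ x - s), x))) = F (φ x, x) := by
    rw [intervalIntegral.integral_eq_sub_of_hasDerivAt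
      (f := fun θ => θ * F (s + θ * (φ x - s), x))]
    · simp
    · intro θ _
      have h1 : HasDerivAt (fun θ : ℝ => s + θ * (φ x - s)) (φ x - s) θ := by
        simpa using ((hasDerivAt_id θ).mul_const (φ x - s)).const_add s
      have h2 := (hasDerivAt_slice hF (s + θ * (φ x - s)) x).comp θ h1
      have h3 := (hasDerivAt_id θ).mul h2
      refine h3.congr_deriv ?_
      simp only [id, Function.comp_apply]; ring
    · exact Continuous.intervalIntegrable (by fun_prop) _ _
  rw [hftc]
  simp

end Basics

section Ident
variable {n : ℕ}

lemma int_slice {H : ℝ × (Fin n → ℝ) → ℝ} (hH : Continuous H) (hc : HasCompactSupport H)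
    {φ : (Fin n → ℝ) → ℝ} (hφ : Continuous φ) : Integrable (fun x => H (φ x, x)) :=
  Continuous.integrable_of_hasCompactSupport (by fun_prop) (slice_cs hc φ)

lemma int_param {H : ℝ × (Fin n → ℝ) → ℝ} (hH : Continuous H) (hc : HasCompactSupport H)
    {φ : (Fin n → ℝ) → ℝ} (hφ : Continuous φ) (s : ℝ) :
    Integrable (fun x => ∫ t in s..φ x, H (t, x)) := by
  refine Continuous.integrable_of_hasCompactSupport ?_ ?_
  · exact intervalIntegral.continuous_parametric_intervalIntegral_of_continuous
      (f := fun x t => H (t, x)) (by unfold Function.uncurry; fun_prop) hφ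
  · obtain ⟨R, hR⟩ := cs_bound hc
    refine HasCompactSupport.intro (isCompact_closedBall 0 R) (fun x hx => ?_)
    simp [fun t => hR t x hx]

lemma int_bdd_mul {H : ℝ × (Fin n → ℝ) → ℝ} (hH : Continuous H) (hc : HasCompactSupport H)
    {K : NNReal} {φ : (Fin n → ℝ) → ℝ} (hφ : LipschitzWith K φ) (α : Fin n) :
    Integrable (fun x => H (φ x, x) * fderiv ℝ φ x (Pi.single α 1)) := by
  refine (int_slice hH hc hφ.continuous).mul_bdd (c := K) ?_ ?_
  · exact (measurable_fderiv_apply_const ℝ φ _).aestronglyMeasurable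
  · exact Filter.Eventually.of_forall fun x => abs_fderiv_le hφ α x

lemma main_ident {e : ℝ × (Fin n → ℝ) → ℝ} (he : ContDiff ℝ 1 e) (hec : HasCompactSupport e)
    {F : Fin n → ℝ × (Fin n → ℝ) → ℝ} (hF : ∀ α, ContDiff ℝ 1 (F α))
    (hFc : ∀ α, HasCompactSupport (F α))
    {K : NNReal} {φ : (Fin n → ℝ) → ℝ} (hφ : LipschitzWith K φ) (s T : ℝ)
    (hT : ∀ x, |φ x - s| ≤ T) :
    Integrable (fun x => e (φ x, x) - ∑ α, F α (φ x, x) * fderiv ℝ φ x (Pi.single α 1)) ∧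
    ∫ x, (e (φ x, x) - ∑ α, F α (φ x, x) * fderiv ℝ φ x (Pi.single α 1))
      = (∫ x, e (s, x)) + ∫ x, ∫ t in s..φ x, (Dt e (t, x) + ∑ α, Dx α (F α) (t, x)) := by
  have hφc := hφ.continuous
  have i1 := int_slice he.continuous hec hφc
  have i0 := int_slice he.continuous hec (φ := fun _ => s) continuous_const
  have i2 := fun α => int_bdd_mul (hF α).continuous (hFc α) hφ α
  have i3 := int_param (Dt_cont he) (Dt_cs hec) hφc s
  have i4 := fun α => int_param (Dx_cont (hF α) α) (Dx_cs (hFc α) α) hφc s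
  have c1 := Dt_cont he
  have c2 := fun α => Dx_cont (hF α) α
  refine ⟨i1.sub (integrable_finsetSum _ fun α _ => i2 α), ?_⟩
  have h1 : ∀ x, ∫ t in s..φ x, (Dt e (t, x) + ∑ α, Dx α (F α) (t, x))
      = (e (φ x, x) - e (s, x)) + ∑ α, ∫ t in s..φ x, Dx α (F α) (t, x) := by
    intro x
    rw [intervalIntegral.integral_add (Continuous.intervalIntegrable (by fun_prop) _ _)
      (Continuous.intervalIntegrable (by fun_prop) _ _),
      intervalIntegral.integral_finsetSum
        (fun α _ => Continuous.intervalIntegrable (by fun_prop) _ _)]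
    congr 1
    exact intervalIntegral.integral_eq_sub_of_hasDerivAt (f := fun t => e (t, x))
      (fun t _ => hasDerivAt_slice he t x) (Continuous.intervalIntegrable (by fun_prop) _ _)
  simp_rw [h1]
  rw [integral_sub i1 (integrable_finsetSum _ fun α _ => i2 α),
    integral_finsetSum _ (fun α _ => i2 α),
    integral_add (f := fun x => e (φ x, x) - e (s, x)) (i1.sub i0)
      (integrable_finsetSum _ fun α _ => i4 α), integral_sub i1 i0,
    integral_finsetSum _ (fun α _ => i4 α)]
  have h2 : ∀ α, ∫ x, ∫ t in s..φ x, Dx α (F α) (t, x)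
      = - ∫ x, F α (φ x, x) * fderiv ℝ φ x (Pi.single α 1) := by
    intro α
    have := flux (hF α) (hFc α) hφ α s T hT
    rw [integral_add (i2 α) (i4 α)] at this
    linarith
  simp_rw [h2, Finset.sum_neg_distrib]
  ring

lemma param_bound {G : ℝ × (Fin n → ℝ) → ℝ} (hG : Continuous G) (hc : HasCompactSupport G)
    {φ : (Fin n → ℝ) → ℝ} (hφ : Continuous φ) {s a b : ℝ} (hab : a ≤ b) (hs : s ∈ Set.Icc a b)
    (hφab : ∀ x, φ x ∈ Set.Icc a b) :
    ∫ x, ∫ t in s..φ x, G (t, x) ≤ ∫ t in a..b, ∫ x, |G (t, x)| := by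
  have hA : Continuous (fun p => |G p|) := by fun_prop
  have hAc : HasCompactSupport (fun p => |G p|) := hc.comp_left (g := fun y => |y|) abs_zero
  rw [intervalIntegral_integral_swap (f := fun t x => |G (t, x)|)
    (Continuous.integrable_of_hasCompactSupport hA hAc)]
  refine integral_mono (int_param hG hc hφ s)
    (int_param hA hAc (φ := fun _ => b) continuous_const a) fun x => ?_
  have h1 : ∫ t in s..φ x, G (t, x) ≤ ∫ t in Set.uIoc s (φ x), |G (t, x)| :=
    (le_abs_self _).trans (intervalIntegral.norm_integral_le_integral_norm_uIoc (f := fun t => G (t, x)))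
  refine h1.trans ?_
  rw [intervalIntegral.integral_of_le hab]
  refine setIntegral_mono_set ?_ (Filter.Eventually.of_forall fun _ => abs_nonneg _) ?_
  · exact (Continuous.integrableOn_Icc (by fun_prop)).mono_set Set.Ioc_subset_Icc_self
  · refine LE.le.eventuallyLE ?_
    rw [Set.uIoc]
    exact Set.Ioc_subset_Ioc (le_min hs.1 (hφab x).1) (max_le hs.2 (hφab x).2)

lemma cont_int {H : ℝ × (Fin n → ℝ) → ℝ} (hH : Continuous H) (hc : HasCompactSupport H) :
    Continuous (fun t => ∫ x, H (t, x)) := by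
  obtain ⟨R, hR⟩ := cs_bound hc
  have : (fun t => ∫ x, H (t, x)) = fun t => ∫ x in Metric.closedBall 0 R, H (t, x) := by
    funext t
    rw [setIntegral_eq_integral_of_forall_compl_eq_zero (fun x hx => hR t x hx)]
  rw [this]
  exact continuous_parametric_integral_of_continuous
    (f := fun t x => H (t, x)) (by unfold Function.uncurry; fun_prop) (isCompact_closedBall 0 R)

/-- Energy inequality on graphs, in abstract form. -/
lemma main_ineq {e : ℝ × (Fin n → ℝ) → ℝ} (he : ContDiff ℝ 1 e) (hec : HasCompactSupport e)
    {F : Fin n → ℝ × (Fin n → ℝ) → ℝ} (hF : ∀ α, ContDiff ℝ 1 (F α))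
    (hFc : ∀ α, HasCompactSupport (F α))
    {L : NNReal} {φ : (Fin n → ℝ) → ℝ} (hφ : LipschitzWith L φ) {s a b K : ℝ} {h : ℝ → ℝ}
    (hab : a ≤ b) (hs : s ∈ Set.Icc a b) (hφab : ∀ x, φ x ∈ Set.Icc a b)
    (hh : IntervalIntegrable h volume a b) (hh0 : ∀ t, 0 ≤ h t)
    {S : ℝ → ℝ} {B : ℝ} (hSc : Continuous S) (hS : ∀ t ∈ Set.Icc a b, ∫ x, e (t, x) ≤ S t)
    (hB : ∀ t ∈ Set.Icc a b, √(∫ x, e (t, x)) ≤ B) (hK : 0 ≤ K)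
    (hG : ∀ t ∈ Set.Icc a b, ∫ x, |Dt e (t, x) + ∑ α, Dx α (F α) (t, x)|
      ≤ K * (∫ x, e (t, x)) + 2 * √(∫ x, e (t, x)) * h t) :
    ∫ x, (e (φ x, x) - ∑ α, F α (φ x, x) * fderiv ℝ φ x (Pi.single α 1))
      ≤ (∫ x, e (s, x)) + K * (∫ t in a..b, S t) + 2 * B * ∫ t in a..b, h t := by
  have hT : ∀ x, |φ x - s| ≤ b - a := fun x => by
    have := hφab x
    rw [abs_le]; constructor <;> linarith [this.1, this.2, hs.1, hs.2]
  rw [(main_ident he hec hF hFc hφ s _ hT).2]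
  have c1 := Dt_cont he
  have c2 := fun α => Dx_cont (hF α) α
  have hGc : Continuous (fun p => Dt e p + ∑ α, Dx α (F α) p) := by fun_prop
  have hGcs : HasCompactSupport (fun p => Dt e p + ∑ α, Dx α (F α) p) := by
    refine (Dt_cs hec).add ?_
    have : ∀ s : Finset (Fin n), HasCompactSupport (fun p => ∑ α ∈ s, Dx α (F α) p) := by
      intro s
      induction s using Finset.induction_on with
      | empty => simp only [Finset.sum_empty]; exact HasCompactSupport.zero
      | insert i s hi ih =>
        simp only [Finset.sum_insert hi]
        exact (Dx_cs (hFc i) i).add ih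
    exact this _
  have h1 := param_bound hGc hGcs hφ.continuous hab hs hφab
  have hA : Continuous (fun p => |Dt e p + ∑ α, Dx α (F α) p|) := by fun_prop
  have hAc : HasCompactSupport (fun p => |Dt e p + ∑ α, Dx α (F α) p|) :=
    hGcs.comp_left (g := fun y => |y|) abs_zero
  have h2 : ∫ t in a..b, ∫ x, |Dt e (t, x) + ∑ α, Dx α (F α) (t, x)|
      ≤ ∫ t in a..b, (K * S t + 2 * B * h t) := by
    refine intervalIntegral.integral_mono_on hab
      ((cont_int hA hAc).intervalIntegrable _ _) ?_ ?_
    · exact ((hSc.const_mul K).intervalIntegrable _ _).add (hh.const_mul _)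
    · intro t ht
      refine (hG t ht).trans ?_
      have := hS t ht
      have := hB t ht
      have := hh0 t
      gcongr
  rw [intervalIntegral.integral_add ((hSc.const_mul K).intervalIntegrable _ _) (hh.const_mul _),
    intervalIntegral.integral_const_mul, intervalIntegral.integral_const_mul] at h2
  linarith

lemma exp_int {κ s t : ℝ} (_hκ : 0 < κ) :
    κ * ∫ τ in (min s t)..(max s t), Real.exp (κ * |τ - s|) ≤ Real.exp (κ * |t - s|) := by
  rcases le_total s t with h | h
  · rw [min_eq_left h, max_eq_right h]
    rw [intervalIntegral.integral_congr (g := fun τ => Real.exp (-(κ*s) + κ * τ)),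
      intervalIntegral.mul_integral_comp_add_mul (f := Real.exp), integral_exp,
      abs_of_nonneg (sub_nonneg.2 h)]
    · have := Real.exp_pos (-(κ*s) + κ * s)
      have e : -(κ * s) + κ * t = κ * (t - s) := by ring
      rw [e]; linarith
    · intro τ hτ
      rw [Set.uIcc_of_le h] at hτ
      simp only
      rw [abs_of_nonneg (sub_nonneg.2 hτ.1)]; ring_nf
  · rw [min_eq_right h, max_eq_left h]
    rw [intervalIntegral.integral_congr (g := fun τ => Real.exp (κ*s + (-κ) * τ)),
      abs_of_nonpos (sub_nonpos.2 h)]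
    · have e1 := intervalIntegral.mul_integral_comp_add_mul (f := Real.exp) (a := t) (b := s)
        (-κ) (κ*s)
      rw [integral_exp] at e1
      have := Real.exp_pos (κ*s + -κ * s)
      have e : κ * s + -κ * t = κ * -(t - s) := by ring
      rw [e] at e1; linarith
    · intro τ hτ
      rw [Set.uIcc_of_le h] at hτ
      simp only
      rw [abs_of_nonpos (sub_nonpos.2 hτ.2)]; ring_nf

/-- Final estimate in abstract form. -/
lemma abstract_est {e : ℝ × (Fin n → ℝ) → ℝ} (he : ContDiff ℝ 1 e) (hec : HasCompactSupport e)
    {F : Fin n → ℝ × (Fin n → ℝ) → ℝ} (hF : ∀ α, ContDiff ℝ 1 (F α))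
    (hFc : ∀ α, HasCompactSupport (F α))
    {L : NNReal} {φ : (Fin n → ℝ) → ℝ} (hφ : LipschitzWith L φ) {s T K : ℝ} {h : ℝ → ℝ}
    (hT : 0 < T) (hs : s ∈ Set.Icc (-T) T) (hφT : ∀ x, φ x ∈ Set.Icc (-T) T)
    (hh : IntervalIntegrable h volume (-T) T) (hh0 : ∀ t, 0 ≤ h t) (hK : 0 < K)
    (hepos : ∀ t ∈ Set.Icc (-T) T, 0 ≤ ∫ x, e (t, x))
    (hG : ∀ t ∈ Set.Icc (-T) T, ∫ x, |Dt e (t, x) + ∑ α, Dx α (F α) (t, x)|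
      ≤ K * (∫ x, e (t, x)) + 2 * √(∫ x, e (t, x)) * h t) :
    ∫ x, (e (φ x, x) - ∑ α, F α (φ x, x) * fderiv ℝ φ x (Pi.single α 1))
      ≤ (1 + (2 * K * T + 1) * (16 * (Real.exp (4 * K * T)) ^ 2) + 1) *
        ((∫ x, e (s, x)) + (∫ t in (-T)..T, h t) ^ 2) := by
  set E : ℝ → ℝ := fun t => ∫ x, e (t, x) with hE
  set I := ∫ t in (-T)..T, h t with hI
  have hEc : Continuous E := cont_int he.continuous hec
  have hI0 : 0 ≤ I := intervalIntegral.integral_nonneg (by linarith) fun t _ => hh0 t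
  set A := Real.exp (4 * K * T) with hA
  have hA1 : 1 ≤ A := Real.one_le_exp (by positivity)
  obtain ⟨m, hm, hmax⟩ := isCompact_Icc.exists_isMaxOn (s := Set.Icc (-T) T)
    (f := fun t => E t * Real.exp (-(2 * K * |t - s|))) ⟨s, hs⟩
    (by fun_prop)
  set S := E m * Real.exp (-(2 * K * |m - s|)) with hS
  have hS0 : 0 ≤ S := mul_nonneg (hepos m hm) (Real.exp_pos _).le
  have hES : ∀ t ∈ Set.Icc (-T) T, E t ≤ S * Real.exp (2 * K * |t - s|) := by
    intro t ht
    have h1 : E t * Real.exp (-(2 * K * |t - s|)) ≤ S := hmax ht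
    rw [Real.exp_neg, ← div_eq_mul_inv, div_le_iff₀ (Real.exp_pos _)] at h1
    exact h1
  have hEA : ∀ t ∈ Set.Icc (-T) T, E t ≤ S * A := by
    intro t ht
    refine (hES t ht).trans ?_
    gcongr
    rw [hA]
    apply Real.exp_le_exp.2
    have : |t - s| ≤ 2 * T := by
      rw [abs_le]; constructor <;> linarith [ht.1, ht.2, hs.1, hs.2]
    nlinarith
  have hsm : Set.Icc (min s m) (max s m) ⊆ Set.Icc (-T) T :=
    Set.Icc_subset_Icc (le_min hs.1 hm.1) (max_le hs.2 hm.2)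
  have hmm : min s m ≤ max s m := min_le_max
  have hI2 : ∫ t in (min s m)..(max s m), h t ≤ I := by
    rw [hI, intervalIntegral.integral_of_le hmm, intervalIntegral.integral_of_le (by linarith)]
    refine setIntegral_mono_set hh.1 (Filter.Eventually.of_forall fun _ => hh0 _) ?_
    exact LE.le.eventuallyLE
      (Set.Ioc_subset_Ioc (le_min hs.1 hm.1) (max_le hs.2 hm.2))
  -- energy inequality at the maximum point
  have k1 := main_ineq he hec hF hFc (LipschitzWith.const m : LipschitzWith 0 (fun _ => m))
    (s := s) (a := min s m) (b := max s m) (K := K) (h := h)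
    (S := fun t => S * Real.exp (2 * K * |t - s|)) (B := √(S * A)) hmm
    ⟨min_le_left _ _, le_max_left _ _⟩ (fun _ => ⟨min_le_right _ _, le_max_right _ _⟩)
    (hh.mono_set (by
      rw [Set.uIcc_of_le hmm, Set.uIcc_of_le (by linarith)]; exact hsm)) hh0 (by fun_prop)
    (fun t ht => hES t (hsm ht)) (fun t ht => Real.sqrt_le_sqrt (hEA t (hsm ht))) hK.le
    (fun t ht => hG t (hsm ht))
  simp only [fderiv_fun_const, Pi.zero_apply, _root_.zero_apply, mul_zero,
    Finset.sum_const_zero, sub_zero, intervalIntegral.integral_const_mul] at k1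
  have k2 : E m ≤ E s + S / 2 * Real.exp (2 * K * |m - s|) + 2 * √(S * A) * I := by
    have h1 := exp_int (κ := 2 * K) (s := s) (t := m) (by positivity)
    have h2 := mul_le_mul_of_nonneg_left h1 (by positivity : 0 ≤ S / 2)
    have h3 := mul_le_mul_of_nonneg_left hI2 (by positivity : 0 ≤ 2 * √(S * A))
    change E m ≤ E s + _ + _ at k1
    linarith
  have k3 : E m = S * Real.exp (2 * K * |m - s|) := by
    rw [hS, mul_assoc, ← Real.exp_add]; simp
  have hx1 : 1 ≤ Real.exp (2 * K * |m - s|) := Real.one_le_exp (by positivity)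
  have hEs : 0 ≤ E s := hepos s hs
  have k4 : S / 2 ≤ E s + 2 * √(S * A) * I := by
    rw [k3] at k2
    have : S / 2 * 1 ≤ S / 2 * Real.exp (2 * K * |m - s|) := by gcongr
    linarith
  have hsq : √(S * A) ^ 2 = S * A := Real.sq_sqrt (by positivity)
  have k5 : S ≤ 4 * E s + 16 * A * I ^ 2 := by
    have h1 : 2 * √(S * A) * I * A ≤ (S / 4 + 4 * A * I ^ 2) * A := by
      nlinarith [sq_nonneg (√(S * A) - 4 * A * I)]
    have h2 : 2 * √(S * A) * I ≤ S / 4 + 4 * A * I ^ 2 :=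
      le_of_mul_le_mul_right h1 (by linarith)
    linarith
  have k6 : S * A ≤ 16 * A ^ 2 * (E s + I ^ 2) := by
    have : S * A ≤ (4 * E s + 16 * A * I ^ 2) * A := by gcongr
    nlinarith [mul_nonneg (mul_nonneg hEs (by linarith : 0 ≤ A)) (by linarith : 0 ≤ A - 1),
      mul_nonneg hEs (by linarith : 0 ≤ A)]
  have k7 := main_ineq he hec hF hFc hφ (s := s) (a := -T) (b := T) (K := K) (h := h)
    (S := fun t => S * A) (B := √(S * A)) (by linarith) hs hφT hh hh0 continuous_const
    hEA (fun t ht => Real.sqrt_le_sqrt (hEA t ht)) hK.le hG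
  simp only [intervalIntegral.integral_const, smul_eq_mul] at k7
  refine k7.trans ?_
  have k8 : 2 * √(S * A) * I ≤ S * A + I ^ 2 := by nlinarith [sq_nonneg (√(S * A) - I)]
  change E s + _ + _ ≤ (1 + (2 * K * T + 1) * (16 * A ^ 2) + 1) * (E s + I ^ 2)
  have k9 : (2 * K * T + 1) * (S * A) ≤ (2 * K * T + 1) * (16 * A ^ 2 * (E s + I ^ 2)) := by
    gcongr
  have hI2' : 0 ≤ I ^ 2 := by positivity
  change E s + K * ((T - -T) * (S * A)) + 2 * √(S * A) * I ≤ _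
  linarith

end Ident

section PDE
variable {n : ℕ}

lemma cs_ineq {a b : (Fin n → ℝ) → ℝ} (ha : Continuous a) (hac : HasCompactSupport a)
    (hb : Continuous b) (hbc : HasCompactSupport b) :
    ∫ x, |a x| * |b x| ≤ √(∫ x, a x ^ 2) * (eLpNorm b 2 volume).toReal := by
  have ma : MemLp (fun x => |a x|) (ENNReal.ofReal 2) volume :=
    Continuous.memLp_of_hasCompactSupport (by fun_prop)
      (hac.comp_left (g := fun y => |y|) abs_zero)
  have mb : MemLp (fun x => |b x|) (ENNReal.ofReal 2) volume :=
    Continuous.memLp_of_hasCompactSupport (by fun_prop)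
      (hbc.comp_left (g := fun y => |y|) abs_zero)
  have mb' : MemLp b 2 volume := hb.memLp_of_hasCompactSupport hbc
  have h := integral_mul_le_Lp_mul_Lq_of_nonneg (μ := volume) (Real.HolderConjugate.two_two)
    (f := fun x => |a x|) (g := fun x => |b x|)
    (Filter.Eventually.of_forall fun _ => abs_nonneg _)
    (Filter.Eventually.of_forall fun _ => abs_nonneg _) ma mb
  rw [mb'.eLpNorm_eq_integral_rpow_norm (by simp) (by simp)]
  simp only [ENNReal.toReal_ofNat, Real.norm_eq_abs]
  rw [ENNReal.toReal_ofReal (by positivity)]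
  simp only [Real.rpow_two, sq_abs] at h ⊢
  rw [Real.sqrt_eq_rpow]
  rw [← one_div]
  exact h

lemma glue {g h : ℝ × (Fin n → ℝ) → ℝ} {U : Set (ℝ × (Fin n → ℝ))} (hU : IsOpen U)
    (hg : ContDiffOn ℝ 1 g U) (hh : ContDiff ℝ 1 h) (hs : tsupport h ⊆ U) :
    ContDiff ℝ 1 (fun p => g p * h p) := by
  rw [contDiff_iff_contDiffAt]
  intro p
  by_cases hp : p ∈ U
  · exact (hg.contDiffAt (hU.mem_nhds hp)).mul hh.contDiffAt
  · have h1 : h =ᶠ[nhds p] 0 := notMem_tsupport_iff_eventuallyEq.1 fun h => hp (hs h)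
    have h2 : (fun p => g p * h p) =ᶠ[nhds p] fun _ => 0 := by
      filter_upwards [h1] with q hq
      simp [hq]
    exact contDiffAt_const.congr_of_eventuallyEq h2

lemma alg_bound {M C₁ : ℝ} (hM : 0 < M) (hC₁ : 0 < C₁) (vt v f b0 c Q : ℝ) (y b : Fin n → ℝ)
    (gt gx : Fin n → Fin n → ℝ) (hQ : C₁ * ∑ α, y α ^ 2 ≤ Q) (hb0 : |b0| ≤ M)
    (hb : ∀ α, |b α| ≤ M) (hc : |c| ≤ M) (hgt : ∀ α β, |gt α β| ≤ M)
    (hgx : ∀ α β, |gx α β| ≤ M) :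
    |2 * vt * (f - b0 * vt - (∑ α, b α * y α) - c * v) + (∑ α, ∑ β, gt α β * y α * y β)
      - 2 * (∑ α, ∑ β, gx α β * vt * y β) + 2 * v * vt|
      ≤ (M * (3 + n + n ^ 2) + 1 + M * (1 + 2 * n) / C₁) * (vt ^ 2 + Q + v ^ 2)
        + 2 * (|vt| * |f|) := by
  set N := ∑ α, y α ^ 2 with hN
  have hN0 : 0 ≤ N := Finset.sum_nonneg fun _ _ => sq_nonneg _
  have key : ∀ m p q : ℝ, |m| ≤ M → |2 * (m * p * q)| ≤ M * (p ^ 2 + q ^ 2) := by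
    intro m p q hm
    have h1 : 2 * (|p| * |q|) ≤ p ^ 2 + q ^ 2 := by
      nlinarith [sq_nonneg (|p| - |q|), sq_abs p, sq_abs q]
    rw [abs_mul, abs_mul, abs_mul, abs_two]
    calc 2 * (|m| * |p| * |q|) = |m| * (2 * (|p| * |q|)) := by ring
      _ ≤ M * (p ^ 2 + q ^ 2) := by gcongr
  have t1 : |2 * vt * f| = 2 * (|vt| * |f|) := by
    rw [abs_mul, abs_mul, abs_two]; ring
  have t2 : |2 * (b0 * vt * vt)| ≤ M * (vt ^ 2 + vt ^ 2) := key _ _ _ hb0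
  have t3 : |∑ α, 2 * (b α * vt * y α)| ≤ M * (n * vt ^ 2 + N) := by
    refine (Finset.abs_sum_le_sum_abs _ _).trans ?_
    refine (Finset.sum_le_sum fun α _ => key (b α) vt (y α) (hb α)).trans ?_
    rw [← Finset.mul_sum, Finset.sum_add_distrib]
    simp [hN]
  have t4 : |2 * (c * v * vt)| ≤ M * (v ^ 2 + vt ^ 2) := key _ _ _ hc
  have t5 : |∑ α, ∑ β, 2 * (gt α β * y α * y β)| ≤ M * (2 * n * N) := by
    refine (Finset.abs_sum_le_sum_abs _ _).trans ?_
    have : ∀ α, |∑ β, 2 * (gt α β * y α * y β)| ≤ M * (n * y α ^ 2 + N) := by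
      intro α
      refine (Finset.abs_sum_le_sum_abs _ _).trans ?_
      refine (Finset.sum_le_sum fun β _ => key (gt α β) (y α) (y β) (hgt α β)).trans ?_
      rw [← Finset.mul_sum, Finset.sum_add_distrib]
      simp [hN]
    refine (Finset.sum_le_sum fun α _ => this α).trans ?_
    rw [← Finset.mul_sum, Finset.sum_add_distrib, ← Finset.mul_sum]
    simp only [Finset.sum_const, Finset.card_univ, Fintype.card_fin, nsmul_eq_mul, ← hN]
    apply le_of_eq; ring
  have t6 : |∑ α, ∑ β, 2 * (gx α β * vt * y β)| ≤ M * (n ^ 2 * vt ^ 2 + n * N) := by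
    refine (Finset.abs_sum_le_sum_abs _ _).trans ?_
    have : ∀ α, |∑ β, 2 * (gx α β * vt * y β)| ≤ M * (n * vt ^ 2 + N) := by
      intro α
      refine (Finset.abs_sum_le_sum_abs _ _).trans ?_
      refine (Finset.sum_le_sum fun β _ => key (gx α β) vt (y β) (hgx α β)).trans ?_
      rw [← Finset.mul_sum, Finset.sum_add_distrib]
      simp [hN]
    refine (Finset.sum_le_sum fun α _ => this α).trans ?_
    simp only [Finset.sum_const, Finset.card_univ, Fintype.card_fin, nsmul_eq_mul]
    apply le_of_eq; ring
  have t7 : |2 * v * vt| ≤ v ^ 2 + vt ^ 2 := by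
    rw [abs_le]; constructor <;> nlinarith [sq_nonneg (v - vt), sq_nonneg (v + vt)]
  have hNQ : N ≤ Q / C₁ := by rw [le_div_iff₀ hC₁]; linarith
  have hQ0 : 0 ≤ Q := le_trans (by positivity) hQ
  simp only [← Finset.mul_sum] at t3 t5 t6
  have hsum : ∑ α, b α * vt * y α = vt * ∑ α, b α * y α := by
    rw [Finset.mul_sum]; exact Finset.sum_congr rfl fun _ _ => by ring
  rw [hsum] at t3
  have u1 := abs_le.1 t1.le
  have u2 := abs_le.1 t2
  have u3 := abs_le.1 t3
  have u4 := abs_le.1 t4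
  have u5 := abs_le.1 t5
  have u6 := abs_le.1 t6
  have u7 := abs_le.1 t7
  have hMN : M * (1 + 2 * n) * N ≤ M * (1 + 2 * n) * (Q / C₁) := by gcongr
  have e1 : M * (1 + 2 * n) * (Q / C₁) = M * (1 + 2 * n) / C₁ * Q := by ring
  have p0 : 0 ≤ M * (1 + 2 * n) / C₁ := by positivity
  have p1 : 0 ≤ M * (1 + 2 * n) / C₁ * vt ^ 2 := by positivity
  have p2 : 0 ≤ M * (1 + 2 * n) / C₁ * v ^ 2 := by positivity
  have p3 : 0 ≤ M * (3 + n + n ^ 2) * Q := by positivity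
  have p4 : 0 ≤ M * (2 + n + n ^ 2) * v ^ 2 := by positivity
  have fin : 2 * (|vt| * |f|) + M * (vt ^ 2 + vt ^ 2) + M * (n * vt ^ 2 + N) + M * (v ^ 2 + vt ^ 2)
      + M * (n * N) + M * (n ^ 2 * vt ^ 2 + n * N) + (v ^ 2 + vt ^ 2)
      ≤ (M * (3 + n + n ^ 2) + 1 + M * (1 + 2 * n) / C₁) * (vt ^ 2 + Q + v ^ 2)
        + 2 * (|vt| * |f|) := by
    linarith
  rw [abs_le]
  constructor <;> linarith [u1.1, u1.2, u2.1, u2.2, u3.1, u3.2, u4.1, u4.2, u5.1, u5.2, u6.1,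
    u6.2, u7.1, u7.2]

/-- Directional derivative of the energy density. -/
lemma fderiv_e {g : Fin n → Fin n → ℝ × (Fin n → ℝ) → ℝ} {a v : ℝ × (Fin n → ℝ) → ℝ}
    {y : Fin n → ℝ × (Fin n → ℝ) → ℝ} {p : ℝ × (Fin n → ℝ)}
    (hg : ∀ α β, DifferentiableAt ℝ (g α β) p) (ha : DifferentiableAt ℝ a p)
    (hv : DifferentiableAt ℝ v p) (hy : ∀ α, DifferentiableAt ℝ (y α) p)
    (d : ℝ × (Fin n → ℝ)) :
    fderiv ℝ (fun p => a p ^ 2 + (∑ α, ∑ β, g α β p * y α p * y β p) + v p ^ 2) p d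
      = 2 * a p * fderiv ℝ a p d
        + (∑ α, ∑ β, (fderiv ℝ (g α β) p d * y α p * y β p
            + g α β p * fderiv ℝ (y α) p d * y β p + g α β p * y α p * fderiv ℝ (y β) p d))
        + 2 * v p * fderiv ℝ v p d := by
  have h1 : ∀ α β, HasFDerivAt (fun p => g α β p * y α p * y β p) _ p := fun α β =>
    ((hg α β).hasFDerivAt.mul (hy α).hasFDerivAt).mul (hy β).hasFDerivAt
  have h2 : HasFDerivAt (fun p => ∑ α, ∑ β, g α β p * y α p * y β p) _ p :=
    HasFDerivAt.fun_sum fun α _ => HasFDerivAt.fun_sum fun β _ => h1 α β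
  have h4 : HasFDerivAt (fun p => a p ^ 2) _ p := ha.hasFDerivAt.pow 2
  have h5 : HasFDerivAt (fun p => v p ^ 2) _ p := hv.hasFDerivAt.pow 2
  have h3 := (h4.fun_add h2).fun_add h5
  rw [h3.fderiv]
  simp only [add_apply, _root_.sum_apply, smul_apply, smul_eq_mul]
  congr 1
  · congr 1
    · simp
    · refine Finset.sum_congr rfl fun α _ => Finset.sum_congr rfl fun β _ => ?_
      rw [Pi.mul_apply]
      ring
  · simp

lemma fderiv_F {g : Fin n → ℝ × (Fin n → ℝ) → ℝ} {a : ℝ × (Fin n → ℝ) → ℝ}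
    {y : Fin n → ℝ × (Fin n → ℝ) → ℝ} {p : ℝ × (Fin n → ℝ)}
    (hg : ∀ β, DifferentiableAt ℝ (g β) p) (ha : DifferentiableAt ℝ a p)
    (hy : ∀ α, DifferentiableAt ℝ (y α) p) (d : ℝ × (Fin n → ℝ)) :
    fderiv ℝ (fun p => ∑ β, g β p * (-2 * a p * y β p)) p d
      = ∑ β, -2 * (fderiv ℝ (g β) p d * a p * y β p + g β p * fderiv ℝ a p d * y β p
          + g β p * a p * fderiv ℝ (y β) p d) := by
  have h1 : ∀ β, HasFDerivAt (fun p => g β p * (-2 * a p * y β p)) _ p := fun β =>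
    (hg β).hasFDerivAt.mul ((ha.hasFDerivAt.const_mul (-2)).mul (hy β).hasFDerivAt)
  have h2 : HasFDerivAt (fun p => ∑ β, g β p * (-2 * a p * y β p)) _ p :=
    HasFDerivAt.fun_sum fun β _ => h1 β
  rw [h2.fderiv]
  simp only [add_apply, _root_.sum_apply, smul_apply, smul_eq_mul]
  refine Finset.sum_congr rfl fun β _ => ?_
  ring

lemma alg_ident (g gt yx : Fin n → Fin n → ℝ) (gx : Fin n → Fin n → ℝ) (y yt ax : Fin n → ℝ)
    (hsymm : ∀ α β, g α β = g β α) (hsch : ∀ α, yt α = ax α) (a at' v : ℝ) :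
    2 * a * at' + (∑ α, ∑ β, (gt α β * y α * y β + g α β * yt α * y β + g α β * y α * yt β))
      + 2 * v * a
      + ∑ α, ∑ β, -2 * (gx α β * a * y β + g α β * ax α * y β + g α β * a * yx α β)
    = 2 * a * (at' - ∑ α, ∑ β, g α β * yx α β) + (∑ α, ∑ β, gt α β * y α * y β)
      - 2 * (∑ α, ∑ β, gx α β * a * y β) + 2 * v * a := by
  have h1 : ∑ α, ∑ β, g α β * y α * yt β = ∑ α, ∑ β, g α β * yt α * y β := by
    rw [Finset.sum_comm]
    refine Finset.sum_congr rfl fun α _ => Finset.sum_congr rfl fun β _ => ?_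
    rw [hsymm]; ring
  have h2 : ∑ α, ∑ β, g α β * a * yx α β = a * ∑ α, ∑ β, g α β * yx α β := by
    simp only [Finset.mul_sum]
    refine Finset.sum_congr rfl fun α _ => Finset.sum_congr rfl fun β _ => ?_
    ring
  simp only [Finset.sum_add_distrib, ← Finset.mul_sum, ← hsch, h1, h2]
  ring

lemma alg_trace (g : Fin n → Fin n → ℝ) (hsymm : ∀ α β, g α β = g β α) (y ψ : Fin n → ℝ)
    (a v C₁ : ℝ) (hC₁ : 0 < C₁)
    (hell : ∀ ξ : Fin n → ℝ, C₁ * (∑ α, (ξ α) ^ 2) ≤ ∑ α, ∑ β, g α β * ξ α * ξ β)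
    (hψ : ∑ α, ∑ β, g α β * ψ α * ψ β ≤ 1) :
    v ^ 2 + ∑ α, (a * ψ α + y α) ^ 2 ≤ (1 + 1 / C₁) *
      ((a ^ 2 + (∑ α, ∑ β, g α β * y α * y β) + v ^ 2)
        - ∑ α, (∑ β, g α β * (-2 * a * y β)) * ψ α) := by
  have h0 := hell (fun α => a * ψ α + y α)
  have h1 : ∑ α, ∑ β, g α β * (a * ψ α + y α) * (a * ψ β + y β)
      = a ^ 2 * (∑ α, ∑ β, g α β * ψ α * ψ β) + 2 * a * (∑ α, ∑ β, g α β * ψ α * y β)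
        + ∑ α, ∑ β, g α β * y α * y β := by
    have hs : ∑ α, ∑ β, g α β * y α * ψ β = ∑ α, ∑ β, g α β * ψ α * y β := by
      rw [Finset.sum_comm]
      refine Finset.sum_congr rfl fun α _ => Finset.sum_congr rfl fun β _ => ?_
      rw [hsymm]; ring
    have : ∀ α β, g α β * (a * ψ α + y α) * (a * ψ β + y β) = a ^ 2 * (g α β * ψ α * ψ β)
      + a * (g α β * ψ α * y β) + a * (g α β * y α * ψ β) + g α β * y α * y β := fun _ _ => by ring
    simp only [this, Finset.sum_add_distrib, ← Finset.mul_sum, hs]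
    ring
  have h2 : ∑ α, (∑ β, g α β * (-2 * a * y β)) * ψ α
      = -2 * a * (∑ α, ∑ β, g α β * ψ α * y β) := by
    simp only [Finset.mul_sum, Finset.sum_mul]
    refine Finset.sum_congr rfl fun α _ => Finset.sum_congr rfl fun β _ => ?_
    ring
  rw [h1] at h0
  rw [h2]
  set N := ∑ α, (a * ψ α + y α) ^ 2
  have hN0 : 0 ≤ N := Finset.sum_nonneg fun _ _ => sq_nonneg _
  set Ψ := ∑ α, ∑ β, g α β * ψ α * ψ β
  have h3 : a ^ 2 * Ψ ≤ a ^ 2 * 1 := by gcongr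
  set D := a ^ 2 + (∑ α, ∑ β, g α β * y α * y β) + v ^ 2
    - -2 * a * (∑ α, ∑ β, g α β * ψ α * y β) with hD
  have h4 : C₁ * N + v ^ 2 ≤ D := by rw [hD]; linarith
  have h5 : v ^ 2 ≤ D := by nlinarith
  have h6 : N ≤ 1 / C₁ * D := by
    rw [one_div, inv_mul_eq_div, le_div_iff₀ hC₁]; nlinarith [sq_nonneg v]
  linarith

end PDE

section Core
variable {n : ℕ}

lemma hcs_sum {ι : Type*} (s : Finset ι) {H : ι → ℝ × (Fin n → ℝ) → ℝ}
    (h : ∀ i, HasCompactSupport (H i)) : HasCompactSupport (fun p => ∑ i ∈ s, H i p) := by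
  classical
  induction s using Finset.induction_on with
  | empty => simp only [Finset.sum_empty]; exact HasCompactSupport.zero
  | insert i s hi ih =>
    simp only [Finset.sum_insert hi]
    exact (h i).add ih

lemma Dt_contDiff {v : ℝ × (Fin n → ℝ) → ℝ} (hv : ContDiff ℝ 2 v) : ContDiff ℝ 1 (Dt v) := by
  have : ContDiff ℝ 1 (fderiv ℝ v) := hv.fderiv_right (by norm_num)
  unfold Dt; fun_prop

lemma Dx_contDiff {v : ℝ × (Fin n → ℝ) → ℝ} (hv : ContDiff ℝ 2 v) (α : Fin n) :
    ContDiff ℝ 1 (Dx α v) := by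
  have : ContDiff ℝ 1 (fderiv ℝ v) := hv.fderiv_right (by norm_num)
  unfold Dx; fun_prop

lemma schwarz {v : ℝ × (Fin n → ℝ) → ℝ} (hv : ContDiff ℝ 2 v) (α : Fin n)
    (p : ℝ × (Fin n → ℝ)) : Dt (Dx α v) p = Dx α (Dt v) p := by
  have h1 : ContDiff ℝ 1 (fderiv ℝ v) := hv.fderiv_right (by norm_num)
  have h2 : DifferentiableAt ℝ (fderiv ℝ v) p := h1.differentiable (by simp) p
  have h3 : ∀ d, HasFDerivAt (fun q => fderiv ℝ v q d) ((fderiv ℝ (fderiv ℝ v) p).flip d) p := by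
    intro d
    have := h2.hasFDerivAt.clm_apply (hasFDerivAt_const d p)
    refine this.congr_fderiv ?_
    ext <;> simp
  have h4 := (hv.contDiffAt (x := p)).isSymmSndFDerivAt (by simp)
  change fderiv ℝ (fun q => fderiv ℝ v q (0, Pi.single α 1)) p (1, 0)
    = fderiv ℝ (fun q => fderiv ℝ v q (1, 0)) p (0, Pi.single α 1)
  rw [(h3 _).fderiv, (h3 _).fderiv]
  simpa using h4 _ _

lemma tsupport_Dt (v : ℝ × (Fin n → ℝ) → ℝ) : tsupport (Dt v) ⊆ tsupport v :=
  tsupport_fderiv_apply_subset ℝ _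

lemma tsupport_Dx (v : ℝ × (Fin n → ℝ) → ℝ) (α : Fin n) : tsupport (Dx α v) ⊆ tsupport v :=
  tsupport_fderiv_apply_subset ℝ _

/-- The constant in the energy inequality. -/
noncomputable def Kc (n : ℕ) (M C₁ : ℝ) : ℝ :=
  M * (3 + n + n ^ 2) + 1 + M * (1 + 2 * n) / C₁

theorem core (T C₁ M : ℝ) (hT : 0 < T) (hC₁ : 0 < C₁) (hM : 0 < M)
    (U : Set (ℝ × (Fin n → ℝ))) (hU : IsOpen U)
    (hTU : Set.Icc (-T) T ×ˢ (Set.univ : Set (Fin n → ℝ)) ⊆ U)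
    (g : Fin n → Fin n → ℝ × (Fin n → ℝ) → ℝ)
    (hg : ∀ α β, ContDiffOn ℝ 1 (g α β) U)
    (hsymm : ∀ α β p, g α β p = g β α p)
    (hell : ∀ p ∈ Set.Icc (-T) T ×ˢ (Set.univ : Set (Fin n → ℝ)), ∀ ξ : Fin n → ℝ,
      C₁ * (∑ α, (ξ α) ^ 2) ≤ (∑ α, ∑ β, g α β p * ξ α * ξ β))
    (hgM : ∀ α β, ∀ p ∈ Set.Icc (-T) T ×ˢ (Set.univ : Set (Fin n → ℝ)),
      |Dt (g α β) p| ≤ M ∧ ∀ μ, |Dx μ (g α β) p| ≤ M)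
    (b0 : ℝ × (Fin n → ℝ) → ℝ) (b : Fin n → ℝ × (Fin n → ℝ) → ℝ)
    (c : ℝ × (Fin n → ℝ) → ℝ)
    (hbc : ∀ p ∈ Set.Icc (-T) T ×ˢ (Set.univ : Set (Fin n → ℝ)),
      |b0 p| ≤ M ∧ (∀ α, |b α p| ≤ M) ∧ |c p| ≤ M)
    (f : ℝ × (Fin n → ℝ) → ℝ) (hf : Continuous f)
    (hfi : IntegrableOn (fun τ => (eLpNorm (fun x => f (τ, x)) 2 volume).toReal)
      (Set.Icc (-T) T))
    {L : NNReal} (φ : (Fin n → ℝ) → ℝ) (hφ : LipschitzWith L φ)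
    (hφT : ∀ x, -T < φ x ∧ φ x < T)
    (hspace : ∀ᵐ x : Fin n → ℝ,
      (∑ α, ∑ β, g α β (φ x, x) * fderiv ℝ φ x (Pi.single α 1)
        * fderiv ℝ φ x (Pi.single β 1)) ≤ 1)
    (v : ℝ × (Fin n → ℝ) → ℝ) (hv : ContDiff ℝ 2 v) (hvc : HasCompactSupport v)
    (hvU : tsupport v ⊆ U)
    (heq : ∀ p ∈ Set.Icc (-T) T ×ˢ (Set.univ : Set (Fin n → ℝ)),
      Dt (Dt v) p - (∑ α, ∑ β, g α β p * Dx α (Dx β v) p)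
        + b0 p * Dt v p + (∑ α, b α p * Dx α v p) + c p * v p = f p)
    (s : ℝ) (hs : s ∈ Set.Icc (-T) T) :
    (∫ x : Fin n → ℝ, ((v (φ x, x)) ^ 2
        + ∑ α, (fderiv ℝ (fun y => v (φ y, y)) x (Pi.single α 1)) ^ 2))
      ≤ (1 + 1 / C₁) * ((1 + (2 * Kc n M C₁ * T + 1)
          * (16 * (Real.exp (4 * Kc n M C₁ * T)) ^ 2) + 1) * (energy g v s
          + (∫ τ in (-T)..T, (eLpNorm (fun x => f (τ, x)) 2 volume).toReal) ^ 2)) := by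
  set e : ℝ × (Fin n → ℝ) → ℝ := fun p =>
    Dt v p ^ 2 + (∑ α, ∑ β, g α β p * Dx α v p * Dx β v p) + v p ^ 2 with he_def
  set F : Fin n → ℝ × (Fin n → ℝ) → ℝ := fun α p =>
    ∑ β, g α β p * (-2 * Dt v p * Dx β v p) with hF_def
  have hvt := Dt_contDiff hv
  have hvx := fun α => Dx_contDiff hv α
  have hv1 : ContDiff ℝ 1 v := hv.of_le (by norm_num)
  have hvtc := Dt_cs hvc
  have hvxc := fun α => Dx_cs hvc α
  have he : ContDiff ℝ 1 e := by
    refine ((hvt.pow 2).add (ContDiff.sum fun α _ => ContDiff.sum fun β _ => ?_)).add (hv1.pow 2)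
    have := glue hU (hg α β) ((hvx α).mul (hvx β))
      ((tsupport_mul_subset_left (f := Dx α v) (g := Dx β v)).trans ((tsupport_Dx v α).trans hvU))
    simpa only [mul_assoc] using this
  have hF : ∀ α, ContDiff ℝ 1 (F α) := by
    intro α
    refine ContDiff.sum fun β _ => ?_
    exact glue hU (hg α β) ((contDiff_const.mul hvt).mul (hvx β))
      ((tsupport_mul_subset_right (f := fun p => -2 * Dt v p) (g := Dx β v)).trans
        ((tsupport_Dx v β).trans hvU))
  have hec : HasCompactSupport e := by
    refine HasCompactSupport.add (HasCompactSupport.add ?_ ?_) ?_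
    · exact hvtc.comp_left (g := fun y : ℝ => y ^ 2) (by simp)
    · exact hcs_sum _ fun α => hcs_sum _ fun β => HasCompactSupport.mul_left (hvxc β)
    · exact hvc.comp_left (g := fun y : ℝ => y ^ 2) (by simp)
  have hFc : ∀ α, HasCompactSupport (F α) := by
    intro α
    exact hcs_sum _ fun β => HasCompactSupport.mul_left (HasCompactSupport.mul_left (hvxc β))
  -- nonnegativity
  have hquad : ∀ p ∈ Set.Icc (-T) T ×ˢ (Set.univ : Set (Fin n → ℝ)),
      0 ≤ ∑ α, ∑ β, g α β p * Dx α v p * Dx β v p := fun p hp =>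
    le_trans (mul_nonneg hC₁.le (Finset.sum_nonneg fun _ _ => sq_nonneg _))
      (hell p hp fun α => Dx α v p)
  have hvte : ∀ p ∈ Set.Icc (-T) T ×ˢ (Set.univ : Set (Fin n → ℝ)), Dt v p ^ 2 ≤ e p := by
    intro p hp
    have := hquad p hp
    simp only [he_def]
    nlinarith [sq_nonneg (v p)]
  have hepos : ∀ t ∈ Set.Icc (-T) T, 0 ≤ ∫ x, e (t, x) := fun t ht =>
    integral_nonneg fun x => (sq_nonneg _).trans (hvte (t, x) ⟨ht, trivial⟩)
  have hKpos : 0 < Kc n M C₁ := by unfold Kc; positivity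
  -- pointwise bound
  have hpt : ∀ p ∈ Set.Icc (-T) T ×ˢ (Set.univ : Set (Fin n → ℝ)),
      |Dt e p + ∑ α, Dx α (F α) p| ≤ Kc n M C₁ * e p + 2 * (|Dt v p| * |f p|) := by
    intro p hp
    have hgd : ∀ α β, DifferentiableAt ℝ (g α β) p := fun α β =>
      ((hg α β).contDiffAt (hU.mem_nhds (hTU hp))).differentiableAt (by simp)
    have d1 := hvt.differentiable (by simp) p
    have d2 := fun α => (hvx α).differentiable (by simp) p
    have d3 := hv1.differentiable (by simp) p
    have e1 : Dt e p = _ := fderiv_e hgd d1 d3 d2 (1, 0)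
    have e2 : ∀ α, Dx α (F α) p = _ := fun α => fderiv_F (hgd α) d1 d2 (0, Pi.single α 1)
    rw [e1]
    simp only [e2]
    have e3 := alg_ident (fun α β => g α β p) (fun α β => Dt (g α β) p)
      (fun α β => Dx α (Dx β v) p) (fun α β => Dx α (g α β) p) (fun α => Dx α v p)
      (fun α => Dt (Dx α v) p) (fun α => Dx α (Dt v) p) (fun α β => hsymm α β p)
      (fun α => schwarz hv α p) (Dt v p) (Dt (Dt v) p) (v p)
    have e4 : Dt (Dt v) p - (∑ α, ∑ β, g α β p * Dx α (Dx β v) p)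
      = f p - b0 p * Dt v p - (∑ α, b α p * Dx α v p) - c p * v p := by
      linarith [heq p hp]
    rw [e4] at e3
    refine le_trans (le_of_eq (congrArg abs e3)) ?_
    exact alg_bound hM hC₁ _ _ _ _ _ _ _ _ _ _ (hell p hp fun α => Dx α v p) (hbc p hp).1
      (hbc p hp).2.1 (hbc p hp).2.2 (fun α β => (hgM α β p hp).1)
      (fun α β => (hgM α β p hp).2 α)
  -- f vanishes off the support of v
  have hf0 : ∀ p ∈ Set.Icc (-T) T ×ˢ (Set.univ : Set (Fin n → ℝ)), p ∉ tsupport v → f p = 0 := by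
    intro p hp hn
    rw [← heq p hp]
    have z0 : v p = 0 := image_eq_zero_of_notMem_tsupport hn
    have z1 : Dt v p = 0 := image_eq_zero_of_notMem_tsupport fun h => hn (tsupport_Dt v h)
    have z2 : ∀ α, Dx α v p = 0 := fun α =>
      image_eq_zero_of_notMem_tsupport fun h => hn (tsupport_Dx v α h)
    have z3 : Dt (Dt v) p = 0 := image_eq_zero_of_notMem_tsupport fun h =>
      hn (tsupport_Dt v (tsupport_Dt _ h))
    have z4 : ∀ α β, Dx α (Dx β v) p = 0 := fun α β => image_eq_zero_of_notMem_tsupport fun h =>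
      hn (tsupport_Dx v β (tsupport_Dx _ α h))
    simp [z0, z1, z2, z3, z4]
  obtain ⟨R, hR⟩ := hvc.isCompact.isBounded.subset_closedBall (0 : ℝ × (Fin n → ℝ))
  have hfc : ∀ t ∈ Set.Icc (-T) T, HasCompactSupport (fun x => f (t, x)) := by
    intro t ht
    refine HasCompactSupport.intro (isCompact_closedBall 0 R) fun x hx => ?_
    refine hf0 (t, x) ⟨ht, trivial⟩ fun h => hx ?_
    have := hR h
    rw [mem_closedBall_zero_iff] at this ⊢
    exact (le_trans (by rw [Prod.norm_def]; exact le_max_right _ _) this)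
  have hevc := he.continuous
  have hvtcont := hvt.continuous
  have hG : ∀ t ∈ Set.Icc (-T) T, ∫ x, |Dt e (t, x) + ∑ α, Dx α (F α) (t, x)|
      ≤ Kc n M C₁ * (∫ x, e (t, x))
        + 2 * √(∫ x, e (t, x)) * (eLpNorm (fun x => f (t, x)) 2 volume).toReal := by
    intro t ht
    have i1 : Integrable (fun x => e (t, x)) :=
      int_slice hevc hec (φ := fun _ => t) continuous_const
    have c1 : HasCompactSupport (fun x => Dt v (t, x)) := slice_cs hvtc (fun _ => t)
    have i2 : Integrable (fun x => |Dt v (t, x)| * |f (t, x)|) := by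
      refine Continuous.integrable_of_hasCompactSupport (by fun_prop) ?_
      exact HasCompactSupport.mul_right (c1.comp_left (g := fun y => |y|) abs_zero)
    have h1 : ∫ x, |Dt e (t, x) + ∑ α, Dx α (F α) (t, x)|
        ≤ ∫ x, (Kc n M C₁ * e (t, x) + 2 * (|Dt v (t, x)| * |f (t, x)|)) :=
      integral_mono_of_nonneg (Filter.Eventually.of_forall fun _ => abs_nonneg _)
        ((i1.const_mul _).add (i2.const_mul _))
        (Filter.Eventually.of_forall fun x => hpt (t, x) ⟨ht, trivial⟩)
    rw [integral_add (i1.const_mul _) (i2.const_mul _), integral_const_mul,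
      integral_const_mul] at h1
    have h2 := cs_ineq (a := fun x => Dt v (t, x)) (b := fun x => f (t, x)) (by fun_prop) c1
      (by fun_prop) (hfc t ht)
    have h3 : √(∫ x, Dt v (t, x) ^ 2) ≤ √(∫ x, e (t, x)) :=
      Real.sqrt_le_sqrt (integral_mono_of_nonneg
        (Filter.Eventually.of_forall fun _ => sq_nonneg _) i1
        (Filter.Eventually.of_forall fun x => hvte (t, x) ⟨ht, trivial⟩))
    have h4 := mul_le_mul_of_nonneg_right h3
      (ENNReal.toReal_nonneg (a := eLpNorm (fun x => f (t, x)) 2 volume))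
    linarith
  have hh : IntervalIntegrable (fun τ => (eLpNorm (fun x => f (τ, x)) 2 volume).toReal)
      volume (-T) T := by
    rw [intervalIntegrable_iff_integrableOn_Icc_of_le (by linarith)]
    exact hfi
  have hφI : ∀ x, φ x ∈ Set.Icc (-T) T := fun x => ⟨(hφT x).1.le, (hφT x).2.le⟩
  have main := abstract_est he hec hF hFc hφ hT hs hφI hh (fun _ => ENNReal.toReal_nonneg) hKpos
    hepos hG
  have hint := (main_ident he hec hF hFc hφ s (2 * T) (fun x => by
    rw [abs_le]; constructor <;> linarith [(hφI x).1, (hφI x).2, hs.1, hs.2])).1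
  refine le_trans (integral_mono_of_nonneg (Filter.Eventually.of_forall fun x => ?_)
    (hint.const_mul (1 + 1 / C₁)) ?_) ?_
  · exact add_nonneg (sq_nonneg _) (Finset.sum_nonneg fun _ _ => sq_nonneg _)
  · filter_upwards [hspace, hφ.ae_differentiableAt (μ := volume)] with x hx hxd
    simp only [chain (hv1.differentiable (by simp) _) hxd]
    exact alg_trace (fun α β => g α β (φ x, x)) (fun α β => hsymm α β _)
      (fun α => Dx α v (φ x, x)) (fun α => fderiv ℝ φ x (Pi.single α 1)) (Dt v (φ x, x))
      (v (φ x, x)) C₁ hC₁ (hell _ ⟨hφI x, trivial⟩) hx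
  · rw [integral_const_mul]
    exact mul_le_mul_of_nonneg_left main (by positivity)

open scoped Manifold in
lemma cutoff {U K : Set (ℝ × (Fin n → ℝ))} (hU : IsOpen U) (hK : IsCompact K) (hKU : K ⊆ U) :
    ∃ χ : ℝ × (Fin n → ℝ) → ℝ, ContDiff ℝ 2 χ ∧ HasCompactSupport χ ∧ tsupport χ ⊆ U ∧
      ∀ p ∈ K, ∀ᶠ q in nhds p, χ q = 1 := by
  obtain ⟨V, hV, hKV, hVU⟩ := exists_compact_between hK hU hKU
  obtain ⟨χ, h1, h2, -⟩ := exists_contMDiffMap_one_nhds_of_subset_interior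
    (n := 2) (𝓘(ℝ, ℝ × (Fin n → ℝ))) hK.isClosed hKV
  have hts : tsupport χ ⊆ V := by
    refine closure_minimal (fun x hx => ?_) hV.isClosed
    by_contra h
    exact hx (h2 x h)
  refine ⟨χ, ?_, hV.of_isClosed_subset isClosed_closure hts, hts.trans hVU, ?_⟩
  · exact χ.contMDiff.contDiff
  · intro p hp
    exact Filter.Eventually.filter_mono (nhds_le_nhdsSet hp) h1

end Core

lemma glue_two {n : ℕ} {g h : ℝ × (Fin n → ℝ) → ℝ} {U : Set (ℝ × (Fin n → ℝ))} (hU : IsOpen U)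
    (hg : ContDiffOn ℝ 2 g U) (hh : ContDiff ℝ 2 h) (hs : tsupport h ⊆ U) :
    ContDiff ℝ 2 (fun p => g p * h p) := by
  rw [contDiff_iff_contDiffAt]
  intro p
  by_cases hp : p ∈ U
  · exact (hg.contDiffAt (hU.mem_nhds hp)).mul hh.contDiffAt
  · have h1 : h =ᶠ[nhds p] 0 := notMem_tsupport_iff_eventuallyEq.1 fun h => hp (hs h)
    have h2 : (fun p => g p * h p) =ᶠ[nhds p] fun _ => 0 := by
      filter_upwards [h1] with q hq
      simp [hq]
    exact contDiffAt_const.congr_of_eventuallyEq h2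

end Helpers

/-- Trace estimate on a weakly spacelike Lipschitz graph: the `H¹`
norm of the trace `w(x) = v(φ(x),x)` of a solution on a Lipschitz weakly spacelike
graph hypersurface is controlled by the energy at any time and the source, with a
constant depending only on `n, T, C₁, C₂, M, Λ`. -/
theorem stmt_10 (n : ℕ) (hn : 1 ≤ n) (T C₁ C₂ M Λ : ℝ)
    (hT : 0 < T) (hC₁ : 0 < C₁) (hC₂ : 0 < C₂) (hM : 0 < M) (hΛ : 0 < Λ) :
    ∃ C : ℝ, 0 < C ∧
      ∀ (U : Set (ℝ × (Fin n → ℝ))), IsOpen U →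
        Set.Icc (-T) T ×ˢ (Set.univ : Set (Fin n → ℝ)) ⊆ U →
      ∀ g : Fin n → Fin n → ℝ × (Fin n → ℝ) → ℝ,
        (∀ α β, ContDiffOn ℝ 1 (g α β) U) →
        (∀ α β p, g α β p = g β α p) →
        (∀ p ∈ Set.Icc (-T) T ×ˢ (Set.univ : Set (Fin n → ℝ)), ∀ ξ : Fin n → ℝ,
          C₁ * (∑ α, (ξ α) ^ 2) ≤ (∑ α, ∑ β, g α β p * ξ α * ξ β) ∧
          (∑ α, ∑ β, g α β p * ξ α * ξ β) ≤ C₂ * (∑ α, (ξ α) ^ 2)) →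
        (∀ α β, ∀ p ∈ Set.Icc (-T) T ×ˢ (Set.univ : Set (Fin n → ℝ)),
          |Dt (g α β) p| ≤ M ∧ ∀ μ, |Dx μ (g α β) p| ≤ M) →
      ∀ (b0 : ℝ × (Fin n → ℝ) → ℝ) (b : Fin n → ℝ × (Fin n → ℝ) → ℝ)
        (c : ℝ × (Fin n → ℝ) → ℝ),
        Measurable b0 → (∀ α, Measurable (b α)) → Measurable c →
        (∀ p ∈ Set.Icc (-T) T ×ˢ (Set.univ : Set (Fin n → ℝ)),
          |b0 p| ≤ M ∧ (∀ α, |b α p| ≤ M) ∧ |c p| ≤ M) →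
      ∀ f : ℝ × (Fin n → ℝ) → ℝ, Continuous f →
        IntegrableOn (fun τ => (eLpNorm (fun x => f (τ, x)) 2 volume).toReal)
          (Set.Icc (-T) T) →
      ∀ φ : (Fin n → ℝ) → ℝ, LipschitzWith (Real.toNNReal Λ) φ →
        (∀ x, -T < φ x ∧ φ x < T) →
        (∀ᵐ x : Fin n → ℝ,
          (∑ α, ∑ β, g α β (φ x, x) * fderiv ℝ φ x (Pi.single α 1)
            * fderiv ℝ φ x (Pi.single β 1)) ≤ 1) →
      ∀ v : ℝ × (Fin n → ℝ) → ℝ, ContDiffOn ℝ 2 v U →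
        (∃ R : ℝ, 0 < R ∧ ∀ (t : ℝ) (x : Fin n → ℝ), R ≤ ‖x‖ → v (t, x) = 0) →
        (∀ p ∈ Set.Icc (-T) T ×ˢ (Set.univ : Set (Fin n → ℝ)),
          Dt (Dt v) p - (∑ α, ∑ β, g α β p * Dx α (Dx β v) p)
            + b0 p * Dt v p + (∑ α, b α p * Dx α v p) + c p * v p = f p) →
      ∀ s ∈ Set.Icc (-T) T,
        (∫ x : Fin n → ℝ,
            ((v (φ x, x)) ^ 2
              + ∑ α, (fderiv ℝ (fun y => v (φ y, y)) x (Pi.single α 1)) ^ 2))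
          ≤ C * (energy g v s
              + (∫ τ in (-T)..T, (eLpNorm (fun x => f (τ, x)) 2 volume).toReal) ^ 2) := by
  have hK0 : 0 < Kc n M C₁ := by unfold Kc; positivity
  refine ⟨(1 + 1 / C₁) * (1 + (2 * Kc n M C₁ * T + 1)
    * (16 * (Real.exp (4 * Kc n M C₁ * T)) ^ 2) + 1), by positivity, ?_⟩
  intro U hU hTU g hg hsymm hell hgM b0 b c _ _ _ hbc f hf hfi φ hφ hφT hspace v hv hR heq s hs
  obtain ⟨R, hR0, hvR⟩ := hR
  have hKc : IsCompact (Set.Icc (-T) T ×ˢ Metric.closedBall (0 : Fin n → ℝ) R) :=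
    isCompact_Icc.prod (isCompact_closedBall _ _)
  obtain ⟨χ, hχ, hχc, hχU, hχ1⟩ := cutoff hU hKc
    (fun p hp => hTU ⟨hp.1, Set.mem_univ _⟩)
  set u : ℝ × (Fin n → ℝ) → ℝ := fun p => v p * χ p with hu_def
  have hu : ContDiff ℝ 2 u := glue_two hU hv hχ hχU
  have huc : HasCompactSupport u := hχc.mul_left
  have huU : tsupport u ⊆ U := (tsupport_mul_subset_right (f := v) (g := χ)).trans hχU
  have huv : ∀ p ∈ Set.Icc (-T) T ×ˢ (Set.univ : Set (Fin n → ℝ)), u =ᶠ[nhds p] v := by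
    intro p hp
    by_cases hpR : ‖p.2‖ ≤ R
    · filter_upwards [hχ1 p ⟨hp.1, by simpa using hpR⟩] with q hq
      simp [hu_def, hq]
    · have h1 : ∀ᶠ q : ℝ × (Fin n → ℝ) in nhds p, R < ‖q.2‖ :=
        (continuous_snd.norm.tendsto p).eventually (lt_mem_nhds (not_le.1 hpR))
      filter_upwards [h1] with q hq
      have : v q = 0 := hvR q.1 q.2 hq.le
      simp [hu_def, this]
  have hDt : ∀ p ∈ Set.Icc (-T) T ×ˢ (Set.univ : Set (Fin n → ℝ)), Dt u =ᶠ[nhds p] Dt v := by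
    intro p hp
    filter_upwards [(huv p hp).fderiv (𝕜 := ℝ)] with q hq
    simp [Dt, hq]
  have hDx : ∀ p ∈ Set.Icc (-T) T ×ˢ (Set.univ : Set (Fin n → ℝ)), ∀ α,
      Dx α u =ᶠ[nhds p] Dx α v := by
    intro p hp α
    filter_upwards [(huv p hp).fderiv (𝕜 := ℝ)] with q hq
    simp [Dx, hq]
  have hDtt : ∀ p ∈ Set.Icc (-T) T ×ˢ (Set.univ : Set (Fin n → ℝ)),
      Dt (Dt u) p = Dt (Dt v) p := by
    intro p hp
    have := (hDt p hp).fderiv_eq (𝕜 := ℝ)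
    unfold Dt at this ⊢
    rw [this]
  have hDxx : ∀ p ∈ Set.Icc (-T) T ×ˢ (Set.univ : Set (Fin n → ℝ)), ∀ α β,
      Dx α (Dx β u) p = Dx α (Dx β v) p := by
    intro p hp α β
    have := (hDx p hp β).fderiv_eq (𝕜 := ℝ)
    unfold Dx at this ⊢
    rw [this]
  have hequ : ∀ p ∈ Set.Icc (-T) T ×ˢ (Set.univ : Set (Fin n → ℝ)),
      Dt (Dt u) p - (∑ α, ∑ β, g α β p * Dx α (Dx β u) p)
        + b0 p * Dt u p + (∑ α, b α p * Dx α u p) + c p * u p = f p := by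
    intro p hp
    rw [← heq p hp, hDtt p hp, (hDt p hp).eq_of_nhds, (huv p hp).eq_of_nhds]
    simp only [hDxx p hp, fun α => (hDx p hp α).eq_of_nhds]
  have hE : energy g u s = energy g v s := by
    unfold energy
    congr 1
    funext x
    have hp : (s, x) ∈ Set.Icc (-T) T ×ˢ (Set.univ : Set (Fin n → ℝ)) := ⟨hs, Set.mem_univ _⟩
    rw [(hDt _ hp).eq_of_nhds, (huv _ hp).eq_of_nhds]
    simp only [fun α => (hDx _ hp α).eq_of_nhds]
  have hI : (∫ x : Fin n → ℝ, ((v (φ x, x)) ^ 2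
        + ∑ α, (fderiv ℝ (fun y => v (φ y, y)) x (Pi.single α 1)) ^ 2))
      = ∫ x : Fin n → ℝ, ((u (φ x, x)) ^ 2
        + ∑ α, (fderiv ℝ (fun y => u (φ y, y)) x (Pi.single α 1)) ^ 2) := by
    congr 1
    funext x
    have hp : (φ x, x) ∈ Set.Icc (-T) T ×ˢ (Set.univ : Set (Fin n → ℝ)) :=
      ⟨⟨(hφT x).1.le, (hφT x).2.le⟩, Set.mem_univ _⟩
    have hc : Continuous fun y : Fin n → ℝ => (φ y, y) := hφ.continuous.prodMk continuous_id
    have h1 : (fun y => u (φ y, y)) =ᶠ[nhds x] fun y => v (φ y, y) :=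
      (hc.tendsto x).eventually (huv _ hp)
    rw [h1.fderiv_eq, (huv _ hp).eq_of_nhds]
  have := core T C₁ M hT hC₁ hM U hU hTU g hg hsymm (fun p hp ξ => (hell p hp ξ).1) hgM
    b0 b c hbc f hf hfi φ hφ hφT hspace u hu huc huU hequ s hs
  rw [hI, mul_assoc, ← hE]
  exact this
end

section
/- Let n ≥ 1, T ∈ ℝ, let φ : ℝⁿ → ℝ be Lipschitz with φ(x) > −T for every x, and let H : ℝ × ℝⁿ → ℝ be C¹ with compact support. Then the function u : ℝⁿ → ℝ defined by u(x) = ∫_{−T}^{φ(x)} H(t,x) dt is locally Lipschitz, and for almost every x ∈ ℝⁿ, u is differentiable at x with ∂_α u(x) = H(φ(x), x)·∂_αφ(x) + ∫_{−T}^{φ(x)} ∂_α H(t,x) dt for α = 1,…,n, where ∂_αφ denotes the almost-everywhere defined partial derivatives of φ given by Rademacher's theorem. -/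
open MeasureTheory

theorem primitive_strict (n : ℕ) (a : ℝ) (H : ℝ × (Fin n → ℝ) → ℝ) (hH : ContDiff ℝ 1 H)
    (hHc : HasCompactSupport H) (u : ℝ × (Fin n → ℝ)) :
    HasStrictFDerivAt (fun p : ℝ × (Fin n → ℝ) => ∫ t in a..p.1, H (t, p.2))
      ((ContinuousLinearMap.toSpanSingleton ℝ (H u)).coprod
        (∫ t in a..u.1, (fderiv ℝ H (t, u.2)).comp (ContinuousLinearMap.inr ℝ ℝ (Fin n → ℝ)))) u := by
  have hc : Continuous H := hH.continuous
  have hc' : Continuous (fderiv ℝ H) := hH.continuous_fderiv (by norm_num)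
  have hd : Differentiable ℝ H := hH.differentiable (by norm_num)
  obtain ⟨C, hC⟩ := (hHc.fderiv ℝ).exists_bound_of_continuous hc'
  have hcc : Continuous fun q : ℝ × (Fin n → ℝ) =>
      (fderiv ℝ H q).comp (ContinuousLinearMap.inr ℝ ℝ (Fin n → ℝ)) :=
    hc'.clm_comp continuous_const
  have key := hasStrictFDerivAt_uncurry_coprod (𝕜 := ℝ) (u := u)
    (f := fun (s : ℝ) (y : Fin n → ℝ) => ∫ t in a..s, H (t, y))
    (f₁ := fun s y => ContinuousLinearMap.toSpanSingleton ℝ (H (s, y)))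
    (f₂ := fun s y => ∫ t in a..s,
      (fderiv ℝ H (t, y)).comp (ContinuousLinearMap.inr ℝ ℝ (Fin n → ℝ)))
    ?_ ?_ ?_ ?_
  · exact key
  · refine Filter.Eventually.of_forall fun v => ?_
    have h : Continuous fun t => H (t, v.2) := by fun_prop
    exact (intervalIntegral.integral_hasDerivAt_right (h.intervalIntegrable _ _)
      h.aestronglyMeasurable.stronglyMeasurableAtFilter h.continuousAt).hasFDerivAt
  · refine Filter.Eventually.of_forall fun v => ?_
    refine intervalIntegral.hasFDerivAt_integral_of_dominated_of_fderiv_le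
      (F := fun y t => H (t, y))
      (F' := fun y t => (fderiv ℝ H (t, y)).comp (ContinuousLinearMap.inr ℝ ℝ (Fin n → ℝ)))
      (bound := fun _ => C * ‖ContinuousLinearMap.inr ℝ ℝ (Fin n → ℝ)‖)
      (s := Set.univ) Filter.univ_mem ?_ ?_ ?_ ?_ ?_ ?_
    · refine Filter.Eventually.of_forall fun y => ?_
      have h : Continuous fun t => H (t, y) := by fun_prop
      exact h.aestronglyMeasurable
    · have h : Continuous fun t => H (t, v.2) := by fun_prop
      exact h.intervalIntegrable _ _
    · have h : Continuous fun t : ℝ => (t, v.2) := by fun_prop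
      exact (hcc.comp h).aestronglyMeasurable
    · refine Filter.Eventually.of_forall fun t _ y _ => ?_
      exact (ContinuousLinearMap.opNorm_comp_le _ _).trans
        (mul_le_mul_of_nonneg_right (hC _) (norm_nonneg _))
    · exact intervalIntegrable_const
    · refine Filter.Eventually.of_forall fun t _ y _ => ?_
      exact (hd (t, y)).hasFDerivAt.comp y (hasFDerivAt_prodMk_right t y)
  · apply Continuous.continuousAt
    exact (ContinuousLinearMap.toSpanSingletonCLE (𝕜 := ℝ) (E := ℝ)).continuous.comp hc
  · apply Continuous.continuousAt
    exact intervalIntegral.continuous_parametric_intervalIntegral_of_continuous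
      (f := fun (p : ℝ × (Fin n → ℝ)) t =>
        (fderiv ℝ H (t, p.2)).comp (ContinuousLinearMap.inr ℝ ℝ (Fin n → ℝ)))
      (hcc.comp (continuous_snd.prodMk (continuous_snd.comp continuous_fst))) continuous_fst

/-- Leibniz rule for an integral with Lipschitz upper limit: for `φ`
Lipschitz with `φ > −T` and `H : ℝ × ℝⁿ → ℝ` a `C¹` compactly supported function, the
function `u(x) = ∫_{−T}^{φ(x)} H(t,x) dt` is locally Lipschitz and for a.e. `x` it is
differentiable with
`∂_α u(x) = H(φ(x),x)·∂_αφ(x) + ∫_{−T}^{φ(x)} ∂_α H(t,x) dt`. -/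
theorem stmt_17 (n : ℕ) (hn : 1 ≤ n) (T : ℝ)
    (φ : (Fin n → ℝ) → ℝ) (hφ : ∃ K : NNReal, LipschitzWith K φ)
    (hφT : ∀ x, -T < φ x)
    (H : ℝ × (Fin n → ℝ) → ℝ) (hH : ContDiff ℝ 1 H) (hHc : HasCompactSupport H) :
    LocallyLipschitz (fun x => ∫ t in (-T)..(φ x), H (t, x)) ∧
    ∀ᵐ x : Fin n → ℝ ∂(volume : Measure (Fin n → ℝ)),
      DifferentiableAt ℝ (fun y => ∫ t in (-T)..(φ y), H (t, y)) x ∧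
      ∀ α, fderiv ℝ (fun y => ∫ t in (-T)..(φ y), H (t, y)) x (Pi.single α 1)
        = H (φ x, x) * fderiv ℝ φ x (Pi.single α 1)
          + ∫ t in (-T)..(φ x), fderiv ℝ H (t, x) (0, Pi.single α 1) := by
  obtain ⟨K, hK⟩ := hφ
  have hG := primitive_strict n (-T) H hH hHc
  constructor
  · have h1 : LocallyLipschitz (fun p : ℝ × (Fin n → ℝ) => ∫ t in (-T)..p.1, H (t, p.2)) :=
      fun p => (hG p).exists_lipschitzOnWith
    exact h1.comp (hK.locallyLipschitz.prodMk LocallyLipschitz.id)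
  · filter_upwards [hK.ae_differentiableAt] with x hx
    have h := (hG (φ x, x)).hasFDerivAt.comp (f := fun y => (φ y, id y)) x (hx.hasFDerivAt.prodMk (hasFDerivAt_id x))
    have h' : HasFDerivAt (fun y => ∫ t in (-T)..(φ y), H (t, y)) _ x := h
    refine ⟨h'.differentiableAt, fun α => ?_⟩
    have hi : IntervalIntegrable (fun t => (fderiv ℝ H (t, x)).comp
        (ContinuousLinearMap.inr ℝ ℝ (Fin n → ℝ))) volume (-T) (φ x) := by
      apply Continuous.intervalIntegrable
      have hc' : Continuous (fderiv ℝ H) := hH.continuous_fderiv (by norm_num)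
      exact (hc'.comp (by fun_prop : Continuous fun t : ℝ => (t, x))).clm_comp continuous_const
    rw [h'.fderiv]
    simp [ContinuousLinearMap.intervalIntegral_apply hi, mul_comm]
end
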